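/- For integers a_0, …, a_15, any prime p with p ≡ 3 (mod 4), any d ∈ {1, 2, 4}, and any integer k ≥ 1: if p^{2k−1} divides N_d, then p^{2k} divides N_d. -/

import Mathlib

open Complex Finset

noncomputable def zeta16 : ℂ := Complex.exp (2 * Real.pi * Complex.I / 16)

noncomputable def fpoly (a : Fin 16 → ℤ) (x : ℂ) : ℂ := ∑ k : Fin 16, (a k : ℂ) * x ^ (k : ℕ)

noncomputable def Nprod (a : Fin 16 → ℤ) (d : ℕ) : ℂ :=
  ∏ l ∈ Finset.filter (fun l => Nat.gcd l 16 = d) (Finset.range 16), fpoly a (zeta16 ^ l)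

def circMatrix (a : Fin 16 → ℤ) : Matrix (Fin 16) (Fin 16) ℤ := fun i j => a (i - j)

def S16 : Set ℤ := { n | ∃ a : Fin 16 → ℤ, n = (circMatrix a).det }

def bcoef (a : Fin 16 → ℤ) (k : Fin 16) : ℤ := (a k + a (k + 8)) + (a (k + 4) + a (k + 12))
def ccoef (a : Fin 16 → ℤ) (k : Fin 16) : ℤ := (a k + a (k + 8)) - (a (k + 4) + a (k + 12))
def ecoef (a : Fin 16 → ℤ) (k : Fin 16) : ℤ := a k - a (k + 8)

/-!
Splitting `P` into its even part `E` and odd part `O`, so that `P(x) = E(x²) + x O(x²)`, gives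
`P(x) P(-x) = Q(x²)` with `Q = E² - X O²`. Since `-ζ^l = ζ^(n + l)` when `ζ^n = -1`, pairing `l`
with `n + l` turns the product of `P` over the odd powers of `ζ` (`n` even) into the product of `Q`
over the odd powers of `ζ²`. When the order of `ζ` is a power of two, iterating this leads down to
the single root `-1`, where the last `Q` takes the value `E(-1)² + O(-1)²`. In a nonzero sum of two
squares every prime `p ≡ 3 (mod 4)` occurs to an even power.
-/

open Polynomial

section Graeffe

variable {S R : Type*}

theorem expand_contract_add_X_mul_expand_contract_divX [CommSemiring S] (P : S[X]) :
    expand S 2 (contract 2 P) + X * expand S 2 (contract 2 P.divX) = P := by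
  ext n
  obtain ⟨m, rfl | rfl⟩ := n.even_or_odd'
  · have hX : (X * expand S 2 (contract 2 P.divX)).coeff (2 * m) = 0 := by
      cases m with
      | zero => simp
      | succ m =>
        rw [show 2 * (m + 1) = 2 * m + 1 + 1 by ring, coeff_X_mul, coeff_expand two_pos,
          if_neg (by omega)]
    rw [coeff_add, hX, add_zero, coeff_expand_mul' two_pos, coeff_contract two_ne_zero, mul_comm]
  · rw [coeff_add, coeff_X_mul, coeff_expand two_pos, if_neg (by omega), zero_add,
      coeff_expand_mul' two_pos, coeff_contract two_ne_zero, coeff_divX, mul_comm]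

theorem aeval_eq_aeval_sq_contract_add [CommSemiring S] [CommSemiring R] [Algebra S R]
    (P : S[X]) (x : R) :
    aeval x P = aeval (x ^ 2) (contract 2 P) + x * aeval (x ^ 2) (contract 2 P.divX) := by
  conv_lhs => rw [← expand_contract_add_X_mul_expand_contract_divX P]
  rw [map_add, map_mul, expand_aeval, expand_aeval, aeval_X]

variable [CommRing S] [CommRing R] [Algebra S R]

/-- The Graeffe transform of `P`, the polynomial `Q` with `Q(x²) = P(x) P(-x)`. It is written in
terms of the even part `contract 2 P` and the odd part `contract 2 P.divX` of `P`. -/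
noncomputable def graeffe (P : S[X]) : S[X] :=
  contract 2 P ^ 2 - X * contract 2 P.divX ^ 2

theorem aeval_sq_graeffe (P : S[X]) (x : R) :
    aeval (x ^ 2) (graeffe P) = aeval x P * aeval (-x) P := by
  rw [aeval_eq_aeval_sq_contract_add P x, aeval_eq_aeval_sq_contract_add P (-x), neg_sq]
  simp only [graeffe, map_sub, map_mul, map_pow, aeval_X]
  ring

theorem eval_neg_one_graeffe (P : S[X]) :
    (graeffe P).eval (-1) =
      (contract 2 P).eval (-1) ^ 2 + (contract 2 P.divX).eval (-1) ^ 2 := by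
  simp [graeffe]

theorem prod_odd_aeval_pow_eq_prod_odd_aeval_graeffe {n : ℕ} (hn : Even n) {ζ : R}
    (hζ : ζ ^ n = -1) (P : S[X]) :
    ∏ l ∈ range (2 * n) with Odd l, aeval (ζ ^ l) P =
      ∏ l ∈ range n with Odd l, aeval ((ζ ^ 2) ^ l) (graeffe P) := by
  simp only [prod_filter]
  rw [two_mul, prod_range_add, ← prod_mul_distrib]
  refine prod_congr rfl fun l _ => ?_
  have hodd : Odd (n + l) ↔ Odd l := by simp [Nat.odd_add', hn]
  have hneg : ζ ^ (n + l) = -ζ ^ l := by rw [pow_add, hζ, neg_one_mul]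
  simp only [hodd, hneg, pow_right_comm ζ 2 l, aeval_sq_graeffe]
  split_ifs <;> simp

theorem exists_prod_odd_aeval_pow_eq_sq_add_sq {n : ℕ} {ζ : R} (hζ : ζ ^ 2 ^ (n + 1) = -1)
    (P : S[X]) :
    ∃ A B : S, ∏ l ∈ range (2 ^ (n + 2)) with Odd l, aeval (ζ ^ l) P =
      algebraMap S R (A ^ 2 + B ^ 2) := by
  induction n generalizing ζ P with
  | zero =>
    refine ⟨(contract 2 P).eval (-1), (contract 2 P.divX).eval (-1), ?_⟩
    have hodd : {l ∈ range (2 ^ (0 + 1)) | Odd l} = {1} := by decide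
    have hsq : (ζ ^ 2) ^ 1 = algebraMap S R (-1) := by simpa using hζ
    rw [pow_succ' 2 (0 + 1), prod_odd_aeval_pow_eq_prod_odd_aeval_graeffe (by simp) hζ, hodd,
      prod_singleton, hsq, aeval_algebraMap_apply, coe_aeval_eq_eval,
      eval_neg_one_graeffe]
  | succ n ih =>
    obtain ⟨A, B, hAB⟩ := ih (by rw [← pow_mul, ← pow_succ', hζ]) (graeffe P)
    refine ⟨A, B, ?_⟩
    rw [← hAB, pow_succ' 2 (n + 2)]
    exact prod_odd_aeval_pow_eq_prod_odd_aeval_graeffe (even_two.pow_of_ne_zero (by simp)) hζ P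

end Graeffe

theorem prod_filter_gcd_mul_eq_prod_coprime {M : Type*} [CommMonoid M] {d : ℕ} (hd : d ≠ 0)
    (n : ℕ) (f : ℕ → M) :
    ∏ l ∈ range (d * n) with l.gcd (d * n) = d, f l =
      ∏ l ∈ range n with l.Coprime n, f (d * l) := by
  have hpos : 0 < d := Nat.pos_of_ne_zero hd
  symm
  refine prod_bij (fun l _ => d * l) ?_ ?_ ?_ fun _ _ => rfl
  · simp +contextual [Nat.gcd_mul_left, hpos]
  · simp [hd]
  · intro m hm
    obtain ⟨hlt, hgcd⟩ := mem_filter.mp hm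
    obtain ⟨l, rfl⟩ : d ∣ m := hgcd ▸ Nat.gcd_dvd_left m (d * n)
    rw [mem_range, Nat.mul_lt_mul_left hpos] at hlt
    rw [Nat.gcd_mul_left, Nat.mul_eq_left hd] at hgcd
    exact ⟨l, by simp [hlt, Nat.Coprime, hgcd], rfl⟩

theorem exists_prod_gcd_eq_aeval_pow_eq_sq_add_sq {S R : Type*} [CommRing S] [CommRing R]
    [Algebra S R] {n d : ℕ} (hd : d ∣ 2 ^ n) {ζ : R} (hζ : ζ ^ 2 ^ (n + 1) = -1) (P : S[X]) :
    ∃ A B : S, ∏ l ∈ range (2 ^ (n + 2)) with l.gcd (2 ^ (n + 2)) = d, aeval (ζ ^ l) P =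
      algebraMap S R (A ^ 2 + B ^ 2) := by
  obtain ⟨i, hi, rfl⟩ := (Nat.dvd_prime_pow Nat.prime_two).mp hd
  obtain ⟨j, rfl⟩ := Nat.exists_eq_add_of_le hi
  have hζi : (ζ ^ 2 ^ i) ^ 2 ^ (j + 1) = -1 := by rw [← pow_mul, ← pow_add, ← add_assoc, hζ]
  have hcoprime (l : ℕ) : l.Coprime (2 ^ (j + 2)) ↔ Odd l := by
    rw [Nat.coprime_pow_right_iff (by positivity), Nat.coprime_two_right]
  obtain ⟨A, B, hAB⟩ := exists_prod_odd_aeval_pow_eq_sq_add_sq hζi P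
  refine ⟨A, B, ?_⟩
  rw [add_assoc, pow_add, prod_filter_gcd_mul_eq_prod_coprime (by positivity), ← hAB]
  simp only [hcoprime, pow_mul]

theorem pow_two_mul_add_two_dvd_sq_add_sq {p : ℕ} (hp : p.Prime) (hp3 : p % 4 = 3) {k : ℕ}
    {A B : ℤ} (h : (p : ℤ) ^ (2 * k + 1) ∣ A ^ 2 + B ^ 2) :
    (p : ℤ) ^ (2 * k + 2) ∣ A ^ 2 + B ^ 2 := by
  have : Fact p.Prime := ⟨hp⟩
  obtain ⟨n, hn⟩ : ∃ n : ℕ, n = A.natAbs ^ 2 + B.natAbs ^ 2 := ⟨_, rfl⟩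
  have hcast : A ^ 2 + B ^ 2 = (n : ℤ) := by simp [hn]
  rw [hcast] at h ⊢
  norm_cast at h ⊢
  obtain rfl | hn0 := eq_or_ne n 0
  · exact dvd_zero _
  have hmem : p ∈ n.primeFactors :=
    Nat.mem_primeFactors.mpr ⟨hp, (dvd_pow_self p (2 * k).succ_ne_zero).trans h, hn0⟩
  obtain ⟨m, hm⟩ : Even (padicValNat p n) := Nat.eq_sq_add_sq_iff.mp ⟨_, _, hn⟩ p hmem hp3
  rw [padicValNat_dvd_iff_le hn0] at h ⊢
  omega

theorem prime_sq_dvd_Nd_general {R : Type*} [CommRing R] [CharZero R] {n : ℕ} {ζ : R}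
    (hζ : ζ ^ 2 ^ (n + 1) = -1) (P : ℤ[X]) {p : ℕ} (hp : p.Prime) (hp3 : p % 4 = 3) {d : ℕ}
    (hd : d ∣ 2 ^ n) {N : ℤ}
    (hN : (N : R) = ∏ l ∈ range (2 ^ (n + 2)) with l.gcd (2 ^ (n + 2)) = d, aeval (ζ ^ l) P)
    {k : ℕ} (hdvd : (p : ℤ) ^ (2 * k + 1) ∣ N) :
    (p : ℤ) ^ (2 * k + 2) ∣ N := by
  obtain ⟨A, B, hAB⟩ := exists_prod_gcd_eq_aeval_pow_eq_sq_add_sq hd hζ P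
  obtain rfl : N = A ^ 2 + B ^ 2 := Int.cast_injective (hN.trans hAB)
  exact pow_two_mul_add_two_dvd_sq_add_sq hp hp3 hdvd

theorem zeta16_pow_eight : zeta16 ^ 8 = -1 := by
  rw [zeta16, ← Complex.exp_nat_mul, ← Complex.exp_pi_mul_I]
  congr 1
  push_cast
  ring

theorem fpoly_eq_aeval_ofFn (a : Fin 16 → ℤ) (x : ℂ) : fpoly a x = aeval x (ofFn 16 a) := by
  simp [fpoly, ofFn_eq_sum_monomial, aeval_monomial]

theorem Nprod_eq_prod_aeval_ofFn (a : Fin 16 → ℤ) (d : ℕ) :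
    Nprod a d = ∏ l ∈ range 16 with l.gcd 16 = d, aeval (zeta16 ^ l) (ofFn 16 a) :=
  prod_congr rfl fun _ _ => fpoly_eq_aeval_ofFn a _

theorem prime_sq_dvd_Nd (a : Fin 16 → ℤ) (p : ℕ) (hp : p.Prime) (hp3 : p % 4 = 3)
    (d : ℕ) (hd : d ∈ ({1, 2, 4} : Set ℕ)) (N : ℤ) (hN : (N : ℂ) = Nprod a d)
    (k : ℕ) (hk : 1 ≤ k) (hdvd : (p : ℤ) ^ (2 * k - 1) ∣ N) :
    (p : ℤ) ^ (2 * k) ∣ N := by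
  obtain ⟨k, rfl⟩ := Nat.exists_eq_add_of_le' hk
  have hd4 : d ∣ 2 ^ 2 := by rcases hd with rfl | rfl | rfl <;> norm_num
  exact prime_sq_dvd_Nd_general (n := 2) zeta16_pow_eight (ofFn 16 a) hp hp3 hd4
    (hN.trans (Nprod_eq_prod_aeval_ofFn a d)) hdvd
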